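/- Let (M,d) be a complete pointed metric space which is 0-hyperbolic and purely 1-unrectifiable. Then for every sequence (μ_n) of finitely supported functions μ_n : M → ℝ with sup_n ‖μ_n‖ < ∞ (free norm), one has ca(μ_n) ≤ de(μ_n). (This is equivalent to the Lipschitz-free space F(M) being 1-Schur, since finitely supported elements are dense.) -/

import Mathlib

open scoped BigOperators

/-- The free norm of a finitely supported function `μ : M → ℝ` over a pointed metric
space `(M, z)`. -/
noncomputable def freeNorm {M : Type*} [MetricSpace M] (z : M) (μ : M →₀ ℝ) : ℝ :=
  sSup {s | ∃ f : M → ℝ, f z = 0 ∧ LipschitzWith 1 f ∧ s = ∑ x ∈ μ.support, μ x * f x}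

/-- `ca(μ_n) = inf_n sup {‖μ_k - μ_l‖ : k, l ≥ n}` computed with the free norm. -/
noncomputable def seqCa {M : Type*} [MetricSpace M] (z : M) (μ : ℕ → M →₀ ℝ) : ℝ :=
  sInf {t | ∃ n : ℕ, t = sSup {s | ∃ k, n ≤ k ∧ ∃ l, n ≤ l ∧ s = freeNorm z (μ k - μ l)}}

/-- `de(μ_n) = sup_f inf_n sup {|⟨μ_k - μ_l, f⟩| : k, l ≥ n}` over `1`-Lipschitz `f`
vanishing at the base point. -/
noncomputable def seqDe {M : Type*} [MetricSpace M] (z : M) (μ : ℕ → M →₀ ℝ) : ℝ :=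
  sSup {t | ∃ f : M → ℝ, f z = 0 ∧ LipschitzWith 1 f ∧
    t = sInf {u | ∃ n : ℕ, u = sSup {s | ∃ k, n ≤ k ∧ ∃ l, n ≤ l ∧
      s = |∑ x ∈ (μ k - μ l).support, (μ k - μ l) x * f x|}}}

/-- `M` is purely `1`-unrectifiable: there is no compact `K ⊆ ℝ` of positive Lebesgue
measure admitting a bi-Lipschitz embedding into `M`. -/
def PurelyOneUnrectifiable (M : Type*) [MetricSpace M] : Prop :=
  ¬ ∃ K : Set ℝ, IsCompact K ∧ 0 < MeasureTheory.volume K ∧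
      ∃ C : ℝ, 0 < C ∧ ∃ φ : ℝ → M, ∀ s ∈ K, ∀ t ∈ K,
        C⁻¹ * |s - t| ≤ dist (φ s) (φ t) ∧ dist (φ s) (φ t) ≤ C * |s - t|

open Filter MeasureTheory Set Topology
open scoped ENNReal NNReal

/-!
A `0`-hyperbolic space sits isometrically in an `ℝ`-tree. Only the subtree spanned by the base point
`z` and the countably many points `x n` in the supports matters; it is a countable union of segments
`[z, x n]` and carries a length measure, for which the free norm of `ν` is the `L¹` norm of the
function sending a point of the tree to the mass that `ν` has beyond it.

By completeness, the points of a segment at distance `0` from `M` lie in `M`, where they form an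
isometric copy of a subset of `ℝ`; pure unrectifiability therefore makes them negligible. At points
at distance at least `r` from `M`, the mass functions of a bounded sequence are bounded and have
bounded variation, with constants of order `1 / r`, because a function on `M` that depends only on
the position relative to such points, and is bounded by `r`, is `1`-Lipschitz. Hence they are
`L¹`-Cauchy there along an ultrafilter, and a gliding hump argument gives one function `g` on the
tree, bounded by `1`, that almost norms infinitely many of them. Integrating `g` along the segments
from `z` gives a `1`-Lipschitz function on `M` which almost norms infinitely many of the differences
`μ k - μ l`.
-/

section GromovProduct

variable {M : Type*} [PseudoMetricSpace M]

/-- The Gromov product `(x | y)` at the base point `z`. In a tree rooted at `z` it is the height at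
which the segments `[z, x]` and `[z, y]` part. -/
noncomputable def gromovProduct (z x y : M) : ℝ :=
  (dist z x + dist z y - dist x y) / 2

lemma gromovProduct_comm (z x y : M) : gromovProduct z x y = gromovProduct z y x := by
  rw [gromovProduct, gromovProduct, dist_comm x y]
  ring

lemma gromovProduct_nonneg (z x y : M) : 0 ≤ gromovProduct z x y := by
  have := dist_triangle_left x y z
  unfold gromovProduct
  linarith

lemma gromovProduct_le_dist_left (z x y : M) : gromovProduct z x y ≤ dist z x := by
  have := dist_triangle z x y
  unfold gromovProduct
  linarith

lemma gromovProduct_le_dist_right (z x y : M) : gromovProduct z x y ≤ dist z y := by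
  rw [gromovProduct_comm]
  exact gromovProduct_le_dist_left z y x

@[simp]
lemma gromovProduct_self (z x : M) : gromovProduct z x x = dist z x := by
  simp [gromovProduct]

@[simp]
lemma gromovProduct_base_left (z x : M) : gromovProduct z z x = 0 := by
  simp [gromovProduct]

lemma dist_eq_sub_gromovProduct (z x y : M) :
    dist x y = dist z x + dist z y - 2 * gromovProduct z x y := by
  rw [gromovProduct]
  ring

@[fun_prop]
lemma continuous_gromovProduct_left (z y : M) : Continuous fun x => gromovProduct z x y := by
  unfold gromovProduct
  fun_prop

variable (M) in
/-- The four-point condition: a metric space is `0`-hyperbolic if and only if it embeds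
isometrically into an `ℝ`-tree. -/
def ZeroHyperbolic : Prop :=
  ∀ x y u v : M, dist x y + dist u v ≤ max (dist x u + dist y v) (dist x v + dist y u)

lemma ZeroHyperbolic.min_gromovProduct_le (hM : ZeroHyperbolic M) (z x y w : M) :
    min (gromovProduct z x y) (gromovProduct z y w) ≤ gromovProduct z x w := by
  have h := hM z y x w
  rw [dist_comm y x] at h
  unfold gromovProduct
  rcases le_max_iff.1 h with h | h
  · exact min_le_of_right_le (by linarith)
  · exact min_le_of_left_le (by linarith)

lemma ZeroHyperbolic.le_gromovProduct (hM : ZeroHyperbolic M) {z x y w : M} {t : ℝ}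
    (hxy : t ≤ gromovProduct z x y) (hyw : t ≤ gromovProduct z y w) : t ≤ gromovProduct z x w :=
  (le_min hxy hyw).trans (hM.min_gromovProduct_le z x y w)

lemma ZeroHyperbolic.le_gromovProduct_iff (hM : ZeroHyperbolic M) {z w w' : M} {t : ℝ}
    (h : t ≤ gromovProduct z w w') (y : M) :
    t ≤ gromovProduct z y w ↔ t ≤ gromovProduct z y w' :=
  ⟨fun hy => hM.le_gromovProduct hy h,
    fun hy => hM.le_gromovProduct hy (h.trans_eq (gromovProduct_comm z w w'))⟩

end GromovProduct

section SegmentDist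

variable {M : Type*} [PseudoMetricSpace M] {z w w' y y' : M} {s t : ℝ}

/-- The distance from `y` to the point at height `t` on the segment `[z, w]`, measured in the
`ℝ`-tree spanned by a `0`-hyperbolic space: `y` branches off `[z, w]` at height `(y | w)`. -/
noncomputable def segmentDist (z w : M) (t : ℝ) (y : M) : ℝ :=
  dist z y - gromovProduct z y w + |t - gromovProduct z y w|

lemma abs_sub_gromovProduct_le_segmentDist (z w : M) (t : ℝ) (y : M) :
    |t - gromovProduct z y w| ≤ segmentDist z w t y :=
  le_add_of_nonneg_left (sub_nonneg.2 (gromovProduct_le_dist_left z y w))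

lemma segmentDist_nonneg (z w : M) (t : ℝ) (y : M) : 0 ≤ segmentDist z w t y :=
  (abs_nonneg _).trans (abs_sub_gromovProduct_le_segmentDist z w t y)

lemma segmentDist_eq_zero_iff :
    segmentDist z w t y = 0 ↔ gromovProduct z y w = t ∧ dist z y = t := by
  constructor
  · intro h
    have ht := abs_sub_gromovProduct_le_segmentDist z w t y
    rw [h] at ht
    have hy : t - gromovProduct z y w = 0 := abs_eq_zero.1 (ht.antisymm (abs_nonneg _))
    rw [segmentDist, hy, abs_zero] at h
    constructor <;> linarith
  · rintro ⟨h, h'⟩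
    simp [segmentDist, h, h']

lemma segmentDist_le_add_abs (z w : M) (s t : ℝ) (y : M) :
    segmentDist z w s y ≤ segmentDist z w t y + |s - t| := by
  have := abs_sub_le s t (gromovProduct z y w)
  unfold segmentDist
  linarith

lemma continuous_segmentDist (z w : M) (t : ℝ) : Continuous (segmentDist z w t) := by
  unfold segmentDist
  fun_prop

lemma dist_sub_le_segmentDist (z w : M) (t : ℝ) (y : M) : dist z y - t ≤ segmentDist z w t y := by
  have := neg_abs_le (t - gromovProduct z y w)
  unfold segmentDist
  linarith

@[simp]
lemma segmentDist_zero (z w y : M) : segmentDist z w 0 y = dist z y := by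
  simp [segmentDist, abs_of_nonneg (gromovProduct_nonneg z y w)]

@[simp]
lemma segmentDist_dist (z w y : M) : segmentDist z w (dist z w) y = dist y w := by
  rw [segmentDist, abs_of_nonneg (sub_nonneg.2 (gromovProduct_le_dist_right z y w)),
    dist_eq_sub_gromovProduct z y w]
  ring

lemma ZeroHyperbolic.segmentDist_congr (hM : ZeroHyperbolic M) (h : t ≤ gromovProduct z w w')
    (y : M) : segmentDist z w t y = segmentDist z w' t y := by
  unfold segmentDist
  by_cases hy : t ≤ gromovProduct z y w
  · have hy' := (hM.le_gromovProduct_iff h y).1 hy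
    rw [abs_of_nonpos (by linarith), abs_of_nonpos (by linarith)]
    ring
  · have hy' := (hM.le_gromovProduct_iff h y).not.1 hy
    have hle : gromovProduct z y w ≤ gromovProduct z y w' :=
      hM.le_gromovProduct le_rfl ((not_le.1 hy).le.trans h)
    have hge : gromovProduct z y w' ≤ gromovProduct z y w :=
      hM.le_gromovProduct le_rfl
        ((not_le.1 hy').le.trans (h.trans_eq (gromovProduct_comm z w w')))
    rw [hle.antisymm hge]

lemma ZeroHyperbolic.dist_le_segmentDist_add (hM : ZeroHyperbolic M) (z w : M) (t : ℝ) (y y' : M) :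
    dist y y' ≤ segmentDist z w t y + segmentDist z w t y' := by
  have ha := abs_le.1 (le_refl |t - gromovProduct z y w|)
  have hb := abs_le.1 (le_refl |t - gromovProduct z y' w|)
  have hmin := hM.min_gromovProduct_le z y w y'
  rw [gromovProduct_comm z w y'] at hmin
  rw [dist_eq_sub_gromovProduct z y y', segmentDist, segmentDist]
  rcases min_le_iff.1 hmin with h | h <;> linarith

lemma ZeroHyperbolic.dist_eq_segmentDist_add (hM : ZeroHyperbolic M)
    (hy : gromovProduct z y w < t) (hy' : t ≤ gromovProduct z y' w) :
    dist y y' = segmentDist z w t y + segmentDist z w t y' := by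
  have hyy' : gromovProduct z y y' = gromovProduct z y w := by
    refine le_antisymm ?_ (hM.le_gromovProduct le_rfl ?_)
    · by_contra! h
      exact (lt_min h (hy.trans_le hy')).not_ge (hM.min_gromovProduct_le z y y' w)
    · rw [gromovProduct_comm z w y']
      exact hy.le.trans hy'
  rw [dist_eq_sub_gromovProduct z y y', hyy', segmentDist, segmentDist,
    abs_of_pos (sub_pos.2 hy), abs_of_nonpos (sub_nonpos.2 hy')]
  ring

end SegmentDist

section SegmentExtension

variable {M : Type*} [PseudoMetricSpace M] {z w w' : M} {f : M → ℝ} {s t : ℝ}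

/-- The McShane extension of `f` to the `ℝ`-tree spanned by a `0`-hyperbolic space, read off along
the segment `[z, w]`, which is parametrised by height. -/
noncomputable def segmentExtension (z w : M) (f : M → ℝ) (t : ℝ) : ℝ :=
  ⨅ y, (f y + segmentDist z w t y)

lemma le_add_dist_of_lipschitzWith_one (hf : LipschitzWith 1 f) (x y : M) :
    f x ≤ f y + dist x y := by
  simpa using hf.le_add_mul x y

lemma bddBelow_range_add_segmentDist (hf : LipschitzWith 1 f) (z w : M) (t : ℝ) :
    BddBelow (range fun y => f y + segmentDist z w t y) := by
  refine ⟨f z - t, ?_⟩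
  rintro _ ⟨y, rfl⟩
  linarith [dist_sub_le_segmentDist z w t y, le_add_dist_of_lipschitzWith_one hf z y]

lemma segmentExtension_le (hf : LipschitzWith 1 f) (z w : M) (t : ℝ) (y : M) :
    segmentExtension z w f t ≤ f y + segmentDist z w t y :=
  ciInf_le (bddBelow_range_add_segmentDist hf z w t) y

lemma lipschitzWith_segmentExtension (hf : LipschitzWith 1 f) (z w : M) :
    LipschitzWith 1 (segmentExtension z w f) := by
  have : Nonempty M := ⟨z⟩
  refine LipschitzWith.of_le_add fun s t => sub_le_iff_le_add.1 (le_ciInf fun y => ?_)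
  have := segmentExtension_le hf z w s y
  have := segmentDist_le_add_abs z w s t y
  rw [Real.dist_eq]
  linarith

lemma segmentExtension_eq_of_segmentDist_eq (hf : LipschitzWith 1 f) {v : M}
    (h : ∀ y, segmentDist z w t y = dist y v) : segmentExtension z w f t = f v := by
  have : Nonempty M := ⟨z⟩
  refine le_antisymm ?_ (le_ciInf fun y => ?_)
  · simpa [h] using segmentExtension_le hf z w t v
  · simpa [h, dist_comm] using le_add_dist_of_lipschitzWith_one hf v y

lemma segmentExtension_zero (hf : LipschitzWith 1 f) (z w : M) : segmentExtension z w f 0 = f z :=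
  segmentExtension_eq_of_segmentDist_eq hf fun y => by rw [segmentDist_zero, dist_comm]

lemma segmentExtension_dist (hf : LipschitzWith 1 f) (z w : M) :
    segmentExtension z w f (dist z w) = f w :=
  segmentExtension_eq_of_segmentDist_eq hf (segmentDist_dist z w)

lemma ZeroHyperbolic.segmentExtension_congr (hM : ZeroHyperbolic M)
    (h : t ≤ gromovProduct z w w') (f : M → ℝ) :
    segmentExtension z w f t = segmentExtension z w' f t := by
  simp only [segmentExtension, hM.segmentDist_congr h]

/-- Extending `0` gives the distance from the point at height `t` on `[z, w]` to the whole space: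
it is positive exactly inside the gaps of the segment. -/
noncomputable def segmentGap (z w : M) : ℝ → ℝ :=
  segmentExtension z w 0

lemma segmentGap_le (z w : M) (t : ℝ) (y : M) : segmentGap z w t ≤ segmentDist z w t y :=
  (segmentExtension_le (LipschitzWith.const' 0) z w t y).trans_eq (zero_add _)

lemma segmentGap_nonneg (z w : M) (t : ℝ) : 0 ≤ segmentGap z w t :=
  Real.iInf_nonneg fun y => by simpa using segmentDist_nonneg z w t y

lemma continuous_segmentGap (z w : M) : Continuous (segmentGap z w) :=
  (lipschitzWith_segmentExtension (LipschitzWith.const' 0) z w).continuous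

lemma ZeroHyperbolic.exists_segmentDist_eq_zero [CompleteSpace M] (hM : ZeroHyperbolic M)
    (ht : segmentGap z w t = 0) : ∃ y, segmentDist z w t y = 0 := by
  have : Nonempty M := ⟨z⟩
  have hex (n : ℕ) : ∃ y, segmentDist z w t y < 1 / (n + 1) := by
    simpa using exists_lt_of_ciInf_lt (ht.trans_lt (Nat.one_div_pos_of_nat (α := ℝ) (n := n)))
  choose y hy using hex
  have hlim : Tendsto (fun n => segmentDist z w t (y n)) atTop (𝓝 0) :=
    squeeze_zero (fun n => segmentDist_nonneg z w t (y n)) (fun n => (hy n).le)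
      tendsto_one_div_add_atTop_nhds_zero_nat
  have hcauchy : CauchySeq y := by
    refine cauchySeq_iff_tendsto_dist_atTop_0.2 (squeeze_zero (fun _ => dist_nonneg)
      (fun p => hM.dist_le_segmentDist_add z w t (y p.1) (y p.2)) ?_)
    rw [← prod_atTop_atTop_eq]
    simpa using (hlim.comp tendsto_fst).add (hlim.comp tendsto_snd)
  obtain ⟨a, ha⟩ := cauchySeq_tendsto_of_complete hcauchy
  exact ⟨a, tendsto_nhds_unique (((continuous_segmentDist z w t).tendsto a).comp ha) hlim⟩

lemma ZeroHyperbolic.dist_eq_abs_sub (hM : ZeroHyperbolic M) {y y' : M}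
    (hy : segmentDist z w s y = 0) (hy' : segmentDist z w t y' = 0) : dist y y' = |s - t| := by
  refine le_antisymm ?_ ?_
  · calc dist y y' ≤ segmentDist z w s y + segmentDist z w s y' :=
          hM.dist_le_segmentDist_add z w s y y'
      _ ≤ segmentDist z w s y + (segmentDist z w t y' + |s - t|) := by
          gcongr
          exact segmentDist_le_add_abs z w s t y'
      _ = |s - t| := by rw [hy, hy', zero_add, zero_add]
  · rw [← (segmentDist_eq_zero_iff.1 hy).2, ← (segmentDist_eq_zero_iff.1 hy').2]
    exact dist_dist_dist_le_right z y y'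

end SegmentExtension

lemma ZeroHyperbolic.volume_segmentGap_eq_zero {M : Type*} [MetricSpace M] [CompleteSpace M]
    (hM : ZeroHyperbolic M) (hM' : PurelyOneUnrectifiable M) (z w : M) :
    volume {t | segmentGap z w t = 0} = 0 := by
  by_contra hpos
  have : Nonempty M := ⟨z⟩
  have hclosed : IsClosed {t | segmentGap z w t = 0} :=
    isClosed_eq (continuous_segmentGap z w) continuous_const
  obtain ⟨K, hK, hKcompact, hKpos⟩ :=
    hclosed.measurableSet.exists_lt_isCompact (pos_iff_ne_zero.2 hpos)
  choose! φ hφ using fun t (ht : segmentGap z w t = 0) => hM.exists_segmentDist_eq_zero ht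
  refine hM' ⟨K, hKcompact, hKpos, 1, one_pos, φ, fun s hs t ht => ?_⟩
  rw [hM.dist_eq_abs_sub (hφ s (hK hs)) (hφ t (hK ht)), inv_one, one_mul]
  exact ⟨le_rfl, le_rfl⟩

section FreeNorm

/-- The duality pairing `⟨μ, f⟩ = ∑ μ(x) f(x)` of functions with finitely supported functions. -/
noncomputable def pairing {M : Type*} : (M → ℝ) →ₗ[ℝ] (M →₀ ℝ) →ₗ[ℝ] ℝ :=
  Finsupp.bilinearCombination ℝ ℝ

lemma pairing_apply {M : Type*} (f : M → ℝ) (μ : M →₀ ℝ) :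
    pairing f μ = ∑ x ∈ μ.support, μ x * f x := by
  rw [pairing, Finsupp.bilinearCombination_apply, Finsupp.linearCombination_apply]
  rfl

variable {M : Type*} [MetricSpace M] {z : M} {f : M → ℝ} {c C : ℝ}

lemma bddAbove_freeNorm (z : M) (μ : M →₀ ℝ) : BddAbove
    {s | ∃ f : M → ℝ, f z = 0 ∧ LipschitzWith 1 f ∧ s = ∑ x ∈ μ.support, μ x * f x} := by
  refine ⟨∑ x ∈ μ.support, |μ x| * dist x z, ?_⟩
  rintro _ ⟨f, hfz, hf, rfl⟩
  refine Finset.sum_le_sum fun x _ => (le_abs_self _).trans ?_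
  rw [abs_mul]
  gcongr
  simpa [hfz] using hf.dist_le_mul x z

lemma pairing_le_freeNorm (hfz : f z = 0) (hf : LipschitzWith 1 f) (μ : M →₀ ℝ) :
    pairing f μ ≤ freeNorm z μ :=
  le_csSup (bddAbove_freeNorm z μ) ⟨f, hfz, hf, pairing_apply f μ⟩

lemma abs_pairing_le_freeNorm (hfz : f z = 0) (hf : LipschitzWith 1 f) (μ : M →₀ ℝ) :
    |pairing f μ| ≤ freeNorm z μ := by
  refine abs_le'.2 ⟨pairing_le_freeNorm hfz hf μ, ?_⟩
  have := pairing_le_freeNorm (z := z) (f := -f) (by simp [hfz]) hf.neg μ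
  rwa [map_neg, LinearMap.neg_apply] at this

lemma freeNorm_le {μ : M →₀ ℝ}
    (h : ∀ f : M → ℝ, f z = 0 → LipschitzWith 1 f → pairing f μ ≤ c) : freeNorm z μ ≤ c := by
  refine csSup_le ⟨_, 0, rfl, LipschitzWith.const' 0, rfl⟩ ?_
  rintro _ ⟨f, hfz, hf, rfl⟩
  exact (pairing_apply f μ).symm.trans_le (h f hfz hf)

lemma freeNorm_nonneg (z : M) (μ : M →₀ ℝ) : 0 ≤ freeNorm z μ :=
  (abs_nonneg _).trans (abs_pairing_le_freeNorm (f := 0) rfl (LipschitzWith.const' 0) μ)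

lemma freeNorm_sub_le (z : M) (μ ν : M →₀ ℝ) :
    freeNorm z (μ - ν) ≤ freeNorm z μ + freeNorm z ν := by
  refine freeNorm_le fun f hfz hf => ?_
  rw [map_sub]
  linarith [pairing_le_freeNorm hfz hf μ, (abs_le.1 (abs_pairing_le_freeNorm hfz hf ν)).1]

lemma exists_lt_freeNorm_sub_of_lt_seqCa {μ : ℕ → M →₀ ℝ} (h : c < seqCa z μ) (n : ℕ) :
    ∃ k ≥ n, ∃ l ≥ n, c < freeNorm z (μ k - μ l) := by
  have hbdd : BddBelow
      {t | ∃ n : ℕ, t = sSup {s | ∃ k, n ≤ k ∧ ∃ l, n ≤ l ∧ s = freeNorm z (μ k - μ l)}} := by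
    refine ⟨0, ?_⟩
    rintro _ ⟨n, rfl⟩
    refine Real.sSup_nonneg ?_
    rintro _ ⟨k, -, l, -, rfl⟩
    exact freeNorm_nonneg z _
  obtain ⟨_, ⟨k, hk, l, hl, rfl⟩, hc⟩ := exists_lt_of_lt_csSup
    (by exact ⟨_, n, le_rfl, n, le_rfl, rfl⟩) (h.trans_le (csInf_le hbdd ⟨n, rfl⟩))
  exact ⟨k, hk, l, hl, hc⟩

lemma le_seqDe {μ : ℕ → M →₀ ℝ} (hμ : ∀ n, freeNorm z (μ n) ≤ C) (hfz : f z = 0)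
    (hf : LipschitzWith 1 f) (h : ∀ n, ∃ k ≥ n, ∃ l ≥ n, c ≤ |pairing f (μ k - μ l)|) :
    c ≤ seqDe z μ := by
  simp only [seqDe, ← pairing_apply]
  have hle {g : M → ℝ} (hgz : g z = 0) (hg : LipschitzWith 1 g) (k l : ℕ) :
      |pairing g (μ k - μ l)| ≤ C + C :=
    (abs_pairing_le_freeNorm hgz hg _).trans
      ((freeNorm_sub_le z _ _).trans (add_le_add (hμ k) (hμ l)))
  refine le_csSup_of_le ⟨C + C, ?_⟩ ⟨f, hfz, hf, rfl⟩ (le_csInf ⟨_, 0, rfl⟩ ?_)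
  · rintro _ ⟨g, hgz, hg, rfl⟩
    refine csInf_le_of_le ⟨0, ?_⟩ ⟨0, rfl⟩ (csSup_le ⟨_, 0, le_rfl, 0, le_rfl, rfl⟩ ?_)
    · rintro _ ⟨n, rfl⟩
      refine Real.sSup_nonneg ?_
      rintro _ ⟨k, -, l, -, rfl⟩
      exact abs_nonneg _
    · rintro _ ⟨k, -, l, -, rfl⟩
      exact hle hgz hg k l
  · rintro _ ⟨n, rfl⟩
    obtain ⟨k, hk, l, hl, hc⟩ := h n
    refine le_csSup_of_le ⟨C + C, ?_⟩ ⟨k, hk, l, hl, rfl⟩ hc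
    rintro _ ⟨k, -, l, -, rfl⟩
    exact hle hfz hf k l

end FreeNorm

section TreeMeasure

variable {M : Type*} [PseudoMetricSpace M] {z : M} {x : ℕ → M} {g : ℕ × ℝ → ℝ}

/-- The heights at which the segment `[z, x n]` has left all the earlier segments `[z, x i]`. -/
def freshHeights (z : M) (x : ℕ → M) (n : ℕ) : Set ℝ :=
  {t ∈ Ioc 0 (dist z (x n)) | ∀ i < n, gromovProduct z (x i) (x n) < t}

/-- The length measure of the `ℝ`-tree spanned by `z` and the points `x n`, with `(n, t)` encoding
the point at height `t` on `[z, x n]`. Charging only fresh heights makes every point of the tree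
count once. -/
noncomputable def treeMeasure (z : M) (x : ℕ → M) : Measure (ℕ × ℝ) :=
  Measure.sum fun n => (volume.restrict (freshHeights z x n)).map (Prod.mk n)

/-- The points of the tree spanned by `z` and the `x n` that lie on `[z, y]`. -/
def treeSegment (z : M) (x : ℕ → M) (y : M) : Set (ℕ × ℝ) :=
  {p | p.2 ≤ gromovProduct z y (x p.1)}

lemma measurableSet_freshHeights (z : M) (x : ℕ → M) (n : ℕ) :
    MeasurableSet (freshHeights z x n) := by
  unfold freshHeights
  measurability

lemma measurableSet_treeSegment (z : M) (x : ℕ → M) (y : M) :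
    MeasurableSet (treeSegment z x y) :=
  measurableSet_le measurable_snd
    ((Measurable.of_discrete (f := fun n => gromovProduct z y (x n))).comp measurable_fst)

lemma ZeroHyperbolic.pairwise_disjoint_freshHeights_inter (hM : ZeroHyperbolic M) (z : M)
    (x : ℕ → M) (y : M) :
    Pairwise (Function.onFun Disjoint
      fun n => Iic (gromovProduct z y (x n)) ∩ freshHeights z x n) := by
  refine (pairwise_disjoint_on _).2 fun i n hin => disjoint_left.2 ?_
  rintro t ⟨hi, -⟩ ⟨hn, -, hfresh⟩
  rw [mem_Iic, gromovProduct_comm] at hi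
  exact (hfresh i hin).not_ge (hM.le_gromovProduct hi hn)

lemma ZeroHyperbolic.map_snd_restrict_treeSegment (hM : ZeroHyperbolic M) (z : M) (x : ℕ → M)
    (y : M) : ((treeMeasure z x).restrict (treeSegment z x y)).map Prod.snd =
      volume.restrict (⋃ n, Iic (gromovProduct z y (x n)) ∩ freshHeights z x n) := by
  have hslice (n : ℕ) : (((volume.restrict (freshHeights z x n)).map (Prod.mk n)).restrict
      (treeSegment z x y)).map Prod.snd =
        volume.restrict (Iic (gromovProduct z y (x n)) ∩ freshHeights z x n) := by
    rw [Measure.restrict_map measurable_prodMk_left (measurableSet_treeSegment z x y),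
      Measure.map_map measurable_snd measurable_prodMk_left]
    rw [Measure.restrict_restrict (measurable_prodMk_left (measurableSet_treeSegment z x y))]
    exact Measure.map_id
  rw [treeMeasure, Measure.restrict_sum _ (measurableSet_treeSegment z x y),
    Measure.map_sum measurable_snd.aemeasurable,
    Measure.restrict_iUnion (hM.pairwise_disjoint_freshHeights_inter z x y)
      fun n => measurableSet_Iic.inter (measurableSet_freshHeights z x n)]
  simp only [hslice]

lemma iUnion_freshHeights_inter_subset (z : M) (x : ℕ → M) (y : M) :
    ⋃ n, Iic (gromovProduct z y (x n)) ∩ freshHeights z x n ⊆ Ioc 0 (dist z y) :=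
  iUnion_subset fun n _ ht => ⟨ht.2.1.1, ht.1.trans (gromovProduct_le_dist_left z y (x n))⟩

lemma ZeroHyperbolic.iUnion_freshHeights_inter_eq (hM : ZeroHyperbolic M) (z : M) (x : ℕ → M)
    (m : ℕ) : ⋃ n, Iic (gromovProduct z (x m) (x n)) ∩ freshHeights z x n =
      Ioc 0 (dist z (x m)) := by
  classical
  refine (iUnion_freshHeights_inter_subset z x (x m)).antisymm fun t ht => mem_iUnion.2 ?_
  have hex : ∃ n, t ≤ gromovProduct z (x m) (x n) := ⟨m, by simpa using ht.2⟩
  have hn := Nat.find_spec hex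
  refine ⟨Nat.find hex, hn, ⟨ht.1, hn.trans (gromovProduct_le_dist_right z _ _)⟩, fun i hi => ?_⟩
  by_contra! h
  rw [gromovProduct_comm] at h
  exact Nat.find_min hex hi (hM.le_gromovProduct hn h)

lemma ZeroHyperbolic.treeMeasure_treeSegment_inter_le (hM : ZeroHyperbolic M) (z : M) (x : ℕ → M)
    (y : M) {s : Set ℝ} (hs : MeasurableSet s) :
    treeMeasure z x (treeSegment z x y ∩ Prod.snd ⁻¹' s) ≤ volume (s ∩ Ioc 0 (dist z y)) := by
  rw [inter_comm, ← Measure.restrict_apply (measurable_snd hs),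
    ← Measure.map_apply measurable_snd hs, hM.map_snd_restrict_treeSegment,
    Measure.restrict_apply hs]
  gcongr
  exact iUnion_freshHeights_inter_subset z x y

lemma ZeroHyperbolic.treeMeasure_treeSegment_le (hM : ZeroHyperbolic M) (z : M) (x : ℕ → M)
    (y : M) : treeMeasure z x (treeSegment z x y) ≤ ENNReal.ofReal (dist z y) := by
  simpa using hM.treeMeasure_treeSegment_inter_le z x y MeasurableSet.univ

lemma ZeroHyperbolic.measureReal_treeSegment_diff_le (hM : ZeroHyperbolic M) (z : M) (x : ℕ → M)
    (y w : M) : (treeMeasure z x).real (treeSegment z x y \ treeSegment z x w) ≤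
      dist z y - gromovProduct z y w := by
  refine ENNReal.toReal_le_of_le_ofReal (sub_nonneg.2 (gromovProduct_le_dist_left z y w)) ?_
  calc treeMeasure z x (treeSegment z x y \ treeSegment z x w)
      ≤ treeMeasure z x (treeSegment z x y ∩ Prod.snd ⁻¹' Ioi (gromovProduct z y w)) := by
        refine measure_mono fun p hp => ⟨hp.1, lt_of_not_ge (α := ℝ) fun h => hp.2 ?_⟩
        exact hM.le_gromovProduct (h.trans_eq (gromovProduct_comm z y w)) hp.1
    _ ≤ volume (Ioi (gromovProduct z y w) ∩ Ioc 0 (dist z y)) :=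
        hM.treeMeasure_treeSegment_inter_le z x y measurableSet_Ioi
    _ ≤ volume (Ioc (gromovProduct z y w) (dist z y)) :=
        measure_mono fun t ht => ⟨ht.1, ht.2.2⟩
    _ = ENNReal.ofReal (dist z y - gromovProduct z y w) := Real.volume_Ioc

/-- The function on `M` whose slope at the point `p` of the tree is `g p`. -/
noncomputable def treeIntegral (z : M) (x : ℕ → M) (g : ℕ × ℝ → ℝ) (y : M) : ℝ :=
  ∫ p in treeSegment z x y, g p ∂treeMeasure z x

lemma ZeroHyperbolic.integrableOn_treeSegment (hM : ZeroHyperbolic M) (hg : Measurable g)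
    (hg1 : ∀ p, |g p| ≤ 1) (y : M) : IntegrableOn g (treeSegment z x y) (treeMeasure z x) :=
  Measure.integrableOn_of_bounded
    ((hM.treeMeasure_treeSegment_le z x y).trans_lt ENNReal.ofReal_lt_top).ne
    hg.aestronglyMeasurable (ae_of_all _ hg1)

lemma ZeroHyperbolic.treeIntegral_base (hM : ZeroHyperbolic M) (z : M) (x : ℕ → M)
    (g : ℕ × ℝ → ℝ) : treeIntegral z x g z = 0 :=
  setIntegral_measure_zero g (by simpa using hM.treeMeasure_treeSegment_le z x z)

lemma ZeroHyperbolic.lipschitzWith_treeIntegral (hM : ZeroHyperbolic M) (hg : Measurable g)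
    (hg1 : ∀ p, |g p| ≤ 1) : LipschitzWith 1 (treeIntegral z x g) := by
  have hdiff (y w : M) : |∫ p in treeSegment z x y \ treeSegment z x w, g p ∂treeMeasure z x| ≤
      dist z y - gromovProduct z y w := by
    refine (norm_setIntegral_le_of_norm_le_const (f := g) (C := 1) ?_ fun p _ => hg1 p).trans ?_
    · exact (measure_mono sdiff_subset).trans_lt
        ((hM.treeMeasure_treeSegment_le z x y).trans_lt ENNReal.ofReal_lt_top)
    · rw [one_mul]
      exact hM.measureReal_treeSegment_diff_le z x y w
  refine LipschitzWith.of_le_add fun y w => ?_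
  have hy := abs_le.1 (hdiff y w)
  have hw := abs_le.1 (hdiff w y)
  rw [treeIntegral, treeIntegral,
    ← integral_inter_add_sdiff (measurableSet_treeSegment z x w)
      (hM.integrableOn_treeSegment hg hg1 y),
    ← integral_inter_add_sdiff (measurableSet_treeSegment z x y)
      (hM.integrableOn_treeSegment hg hg1 w),
    inter_comm (treeSegment z x w), dist_eq_sub_gromovProduct z y w]
  linarith [gromovProduct_comm z y w]

lemma ZeroHyperbolic.treeIntegral_deriv_segmentExtension (hM : ZeroHyperbolic M) {f : M → ℝ}
    (hf : LipschitzWith 1 f) (z : M) (x : ℕ → M) (m : ℕ) :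
    treeIntegral z x (fun p => deriv (segmentExtension z (x p.1) f) p.2) (x m) =
      f (x m) - f z := by
  set e := segmentExtension z (x m) f
  have hmap : ((treeMeasure z x).restrict (treeSegment z x (x m))).map Prod.snd =
      volume.restrict (Ioc 0 (dist z (x m))) := by
    rw [hM.map_snd_restrict_treeSegment, hM.iUnion_freshHeights_inter_eq]
  have hne : ∀ᵐ p ∂(treeMeasure z x).restrict (treeSegment z x (x m)),
      p.2 ∉ range fun n => gromovProduct z (x m) (x n) := by
    refine ae_of_ae_map (p := (· ∉ range fun n => gromovProduct z (x m) (x n)))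
      measurable_snd.aemeasurable ?_
    rw [hmap]
    exact ae_restrict_of_ae ((countable_range _).ae_notMem volume)
  have hderiv : ∀ᵐ p ∂(treeMeasure z x).restrict (treeSegment z x (x m)),
      deriv (segmentExtension z (x p.1) f) p.2 = deriv e p.2 := by
    filter_upwards [hne, ae_restrict_mem (measurableSet_treeSegment z x (x m))] with p hp hpm
    have hlt : p.2 < gromovProduct z (x m) (x p.1) := lt_of_le_of_ne hpm fun h => hp ⟨p.1, h.symm⟩
    refine EventuallyEq.deriv_eq ?_
    filter_upwards [Iio_mem_nhds hlt] with t ht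
    exact (hM.segmentExtension_congr (le_of_lt ht) f).symm
  calc ∫ p in treeSegment z x (x m), deriv (segmentExtension z (x p.1) f) p.2 ∂treeMeasure z x
      = ∫ p in treeSegment z x (x m), deriv e p.2 ∂treeMeasure z x := integral_congr_ae hderiv
    _ = ∫ t in 0..dist z (x m), deriv e t := by
        rw [intervalIntegral.integral_of_le dist_nonneg, ← hmap,
          integral_map measurable_snd.aemeasurable
            (measurable_deriv e).aestronglyMeasurable]
    _ = e (dist z (x m)) - e 0 :=
        ((lipschitzWith_segmentExtension hf z
          (x m)).lipschitzOnWith.absolutelyContinuousOnInterval).integral_deriv_eq_sub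
    _ = f (x m) - f z := by
        rw [← segmentExtension_dist hf z (x m), ← segmentExtension_zero hf z (x m)]

end TreeMeasure

section TreeMass

/-- The points of `M` whose segment from `z` passes through the point at height `t` on `[z, w]`. -/
def beyond {M : Type*} [PseudoMetricSpace M] (z w : M) (t : ℝ) : Set M :=
  {y | t ≤ gromovProduct z y w}

/-- The mass that `ν` has beyond the point at height `t` on `[z, w]`, that is, the amount to be
transported through that point in order to move `ν` to `z`. -/
noncomputable def massBeyond {M : Type*} [PseudoMetricSpace M] (z w : M) (ν : M →₀ ℝ) (t : ℝ) :
    ℝ :=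
  pairing ((beyond z w t).indicator 1) ν

/-- `massBeyond` as a function on the tree spanned by `z` and the points `x n`. -/
noncomputable def treeMass {M : Type*} [PseudoMetricSpace M] (z : M) (x : ℕ → M) (ν : M →₀ ℝ)
    (p : ℕ × ℝ) : ℝ :=
  massBeyond z (x p.1) ν p.2

section PseudoMetricSpace

variable {M : Type*} [PseudoMetricSpace M] {z : M} {x : ℕ → M} {g : ℕ × ℝ → ℝ}

lemma treeMass_mul (z : M) (x : ℕ → M) (ν : M →₀ ℝ) (g : ℕ × ℝ → ℝ) (p : ℕ × ℝ) :
    treeMass z x ν p * g p = ∑ y ∈ ν.support, ν y * (treeSegment z x y).indicator g p := by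
  rw [treeMass, massBeyond, pairing_apply, Finset.sum_mul]
  refine Finset.sum_congr rfl fun y _ => ?_
  by_cases h : p.2 ≤ gromovProduct z y (x p.1) <;> simp [beyond, treeSegment, indicator, h]

lemma measurable_treeMass (z : M) (x : ℕ → M) (ν : M →₀ ℝ) : Measurable (treeMass z x ν) := by
  have h : treeMass z x ν = fun p => ∑ y ∈ ν.support, ν y * (treeSegment z x y).indicator 1 p :=
    funext fun p => by simpa using treeMass_mul z x ν 1 p
  rw [h]
  exact Finset.measurable_fun_sum _ fun y _ => measurable_const.mul
    (measurable_one.indicator (measurableSet_treeSegment z x y))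

lemma ZeroHyperbolic.integrable_indicator_treeSegment (hM : ZeroHyperbolic M) (hg : Measurable g)
    (hg1 : ∀ p, |g p| ≤ 1) (y : M) :
    Integrable ((treeSegment z x y).indicator g) (treeMeasure z x) :=
  (hM.integrableOn_treeSegment hg hg1 y).integrable_indicator (measurableSet_treeSegment z x y)

lemma ZeroHyperbolic.integrable_treeMass_mul (hM : ZeroHyperbolic M) (hg : Measurable g)
    (hg1 : ∀ p, |g p| ≤ 1) (ν : M →₀ ℝ) :
    Integrable (fun p => treeMass z x ν p * g p) (treeMeasure z x) := by
  simp only [treeMass_mul]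
  exact integrable_finsetSum _ fun y _ =>
    (hM.integrable_indicator_treeSegment hg hg1 y).const_mul (ν y)

lemma ZeroHyperbolic.integrable_treeMass (hM : ZeroHyperbolic M) (z : M) (x : ℕ → M)
    (ν : M →₀ ℝ) : Integrable (treeMass z x ν) (treeMeasure z x) := by
  simpa using hM.integrable_treeMass_mul (g := 1) measurable_one (by simp) ν

lemma ZeroHyperbolic.pairing_treeIntegral (hM : ZeroHyperbolic M) (hg : Measurable g)
    (hg1 : ∀ p, |g p| ≤ 1) (ν : M →₀ ℝ) :
    pairing (treeIntegral z x g) ν = ∫ p, treeMass z x ν p * g p ∂treeMeasure z x := by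
  simp only [treeMass_mul]
  rw [pairing_apply, integral_finsetSum _ fun y _ =>
    (hM.integrable_indicator_treeSegment hg hg1 y).const_mul (ν y)]
  refine Finset.sum_congr rfl fun y _ => ?_
  rw [integral_const_mul, integral_indicator (measurableSet_treeSegment z x y), treeIntegral]

end PseudoMetricSpace

lemma measurable_realSign : Measurable Real.sign :=
  Measurable.ite measurableSet_Iio measurable_const
    (Measurable.ite measurableSet_Ioi measurable_const measurable_const)

lemma abs_realSign_le_one (r : ℝ) : |Real.sign r| ≤ 1 := by
  rcases Real.sign_apply_eq r with h | h | h <;> simp [h]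

lemma mul_realSign (r : ℝ) : r * Real.sign r = |r| := by
  obtain h | rfl | h := lt_trichotomy r 0
  · rw [Real.sign_of_neg h, abs_of_neg h, mul_neg_one]
  · simp
  · rw [Real.sign_of_pos h, abs_of_pos h, mul_one]

variable {M : Type*} [MetricSpace M]

theorem ZeroHyperbolic.freeNorm_eq_integral_abs_treeMass (hM : ZeroHyperbolic M) (z : M)
    {x : ℕ → M} {ν : M →₀ ℝ} (hν : ∀ y ∈ ν.support, y ∈ range x) :
    freeNorm z ν = ∫ p, |treeMass z x ν p| ∂treeMeasure z x := by
  refine le_antisymm (freeNorm_le fun f hfz hf => ?_) ?_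
  · set g : ℕ × ℝ → ℝ := fun p => deriv (segmentExtension z (x p.1) f) p.2
    have hg : Measurable g := measurable_from_prod_countable_right fun n =>
      measurable_deriv (segmentExtension z (x n) f)
    have hg1 (p : ℕ × ℝ) : |g p| ≤ 1 := by
      simpa using norm_deriv_le_of_lipschitz (lipschitzWith_segmentExtension hf z (x p.1))
    calc pairing f ν = pairing (treeIntegral z x g) ν := by
          rw [pairing_apply, pairing_apply]
          refine Finset.sum_congr rfl fun y hy => ?_
          obtain ⟨m, rfl⟩ := hν y hy
          rw [hM.treeIntegral_deriv_segmentExtension hf z x m, hfz, sub_zero]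
      _ = ∫ p, treeMass z x ν p * g p ∂treeMeasure z x := hM.pairing_treeIntegral hg hg1 ν
      _ ≤ ∫ p, |treeMass z x ν p| ∂treeMeasure z x := by
          refine integral_mono (hM.integrable_treeMass_mul hg hg1 ν)
            (hM.integrable_treeMass z x ν).abs fun p => (le_abs_self _).trans ?_
          rw [abs_mul]
          exact mul_le_of_le_one_right (abs_nonneg _) (hg1 p)
  · set g : ℕ × ℝ → ℝ := fun p => Real.sign (treeMass z x ν p)
    have hg : Measurable g := measurable_realSign.comp (measurable_treeMass z x ν)
    have hg1 (p : ℕ × ℝ) : |g p| ≤ 1 := abs_realSign_le_one _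
    calc ∫ p, |treeMass z x ν p| ∂treeMeasure z x
        = ∫ p, treeMass z x ν p * g p ∂treeMeasure z x := by simp only [g, mul_realSign]
      _ = pairing (treeIntegral z x g) ν := (hM.pairing_treeIntegral hg hg1 ν).symm
      _ ≤ freeNorm z ν :=
          pairing_le_freeNorm (hM.treeIntegral_base z x g) (hM.lipschitzWith_treeIntegral hg hg1) ν

end TreeMass

section VariationOfMass

variable {M : Type*} [MetricSpace M] {z w : M} {r : ℝ} {s : Set ℝ} {ψ : ℝ → ℝ}

-- A jump of `ψ` at height `t` is only felt by points `y, y'` with `t` on the segment `[y, y']`,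
-- which are then at distance at least twice the gap at `t`.
lemma ZeroHyperbolic.lipschitzWith_comp_gromovProduct (hM : ZeroHyperbolic M) (hr : 0 ≤ r)
    (hs : ∀ t ∈ s, r ≤ segmentGap z w t) (hψ : ∀ v, |ψ v| ≤ 1)
    (hjump : ∀ v v', v < v' → ψ v ≠ ψ v' → ∃ t ∈ s, v < t ∧ t ≤ v') :
    LipschitzWith 1 fun y => r * ψ (gromovProduct z y w) := by
  have hdist {y y' : M} (hlt : gromovProduct z y w < gromovProduct z y' w)
      (hne : ψ (gromovProduct z y w) ≠ ψ (gromovProduct z y' w)) : 2 * r ≤ dist y y' := by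
    obtain ⟨t, ht, hyt, hty'⟩ := hjump _ _ hlt hne
    rw [hM.dist_eq_segmentDist_add hyt hty']
    linarith [hs t ht, segmentGap_le z w t y, segmentGap_le z w t y']
  refine LipschitzWith.of_le_add fun y y' => ?_
  by_cases heq : ψ (gromovProduct z y w) = ψ (gromovProduct z y' w)
  · rw [heq]
    linarith [dist_nonneg (x := y) (y := y')]
  · have hle : 2 * r ≤ dist y y' := by
      rcases lt_or_gt_of_ne (ne_of_apply_ne ψ heq) with hlt | hlt
      · exact hdist hlt heq
      · rw [dist_comm]
        exact hdist hlt (Ne.symm heq)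
    nlinarith [abs_le.1 (hψ (gromovProduct z y w)), abs_le.1 (hψ (gromovProduct z y' w))]

lemma ZeroHyperbolic.mul_abs_pairing_le_freeNorm (hM : ZeroHyperbolic M) (hr : 0 ≤ r)
    (hs : ∀ t ∈ s, r ≤ segmentGap z w t) (hψ : ∀ v, |ψ v| ≤ 1) (hψ0 : ψ 0 = 0)
    (hjump : ∀ v v', v < v' → ψ v ≠ ψ v' → ∃ t ∈ s, v < t ∧ t ≤ v') (ν : M →₀ ℝ) :
    r * |pairing (fun y => ψ (gromovProduct z y w)) ν| ≤ freeNorm z ν := by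
  have h := abs_pairing_le_freeNorm (z := z) (by simp [hψ0])
    (hM.lipschitzWith_comp_gromovProduct hr hs hψ hjump) ν
  have hsmul : (fun y => r * ψ (gromovProduct z y w)) = r • fun y => ψ (gromovProduct z y w) := rfl
  rwa [hsmul, map_smul, LinearMap.smul_apply, smul_eq_mul, abs_mul, abs_of_nonneg hr] at h

lemma exists_lt_le_of_indicator_Ici_ne {t v v' : ℝ} (hv : v < v')
    (h : (Ici t).indicator (1 : ℝ → ℝ) v ≠ (Ici t).indicator 1 v') : v < t ∧ t ≤ v' := by
  by_contra! hnot
  refine h ?_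
  rcases lt_or_ge v t with hvt | htv
  · rw [indicator_of_notMem (by simpa using hvt), indicator_of_notMem (by simpa using hnot hvt)]
  · rw [indicator_of_mem (mem_Ici.2 htv), indicator_of_mem (mem_Ici.2 (htv.trans hv.le))]
    rfl

lemma ZeroHyperbolic.mul_abs_massBeyond_le_freeNorm (hM : ZeroHyperbolic M) {t : ℝ} (hr : 0 ≤ r)
    (ht : 0 < t) (htr : r ≤ segmentGap z w t) (ν : M →₀ ℝ) :
    r * |massBeyond z w ν t| ≤ freeNorm z ν := by
  refine hM.mul_abs_pairing_le_freeNorm (w := w) (s := {t}) (ψ := (Ici t).indicator 1) hr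
    (by simpa using htr) (fun v => ?_) (by simpa using ht) (fun v v' hv hne => ?_) ν
  · by_cases h : t ≤ v <;> simp [indicator, h]
  · exact ⟨t, rfl, exists_lt_le_of_indicator_Ici_ne hv hne⟩

lemma sum_abs_indicator_Ici_sub_le {u : ℕ → ℝ} (hu : Monotone u) (n : ℕ) (v : ℝ) :
    ∑ i ∈ Finset.range n,
      |(Ici (u (i + 1))).indicator (1 : ℝ → ℝ) v - (Ici (u i)).indicator 1 v| ≤ 1 := by
  have hanti (i : ℕ) : (Ici (u (i + 1))).indicator (1 : ℝ → ℝ) v ≤ (Ici (u i)).indicator 1 v :=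
    indicator_le_indicator_of_subset (Ici_subset_Ici.2 (hu i.le_succ)) (fun _ => zero_le_one) v
  calc ∑ i ∈ Finset.range n,
        |(Ici (u (i + 1))).indicator (1 : ℝ → ℝ) v - (Ici (u i)).indicator 1 v|
      = ∑ i ∈ Finset.range n,
        ((Ici (u i)).indicator (1 : ℝ → ℝ) v - (Ici (u (i + 1))).indicator 1 v) :=
        Finset.sum_congr rfl fun i _ => by rw [abs_of_nonpos (sub_nonpos.2 (hanti i)), neg_sub]
    _ = (Ici (u 0)).indicator 1 v - (Ici (u n)).indicator 1 v :=
        Finset.sum_range_sub' (fun i => (Ici (u i)).indicator (1 : ℝ → ℝ) v) n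
    _ ≤ (Ici (u 0)).indicator 1 v := sub_le_self _ (indicator_nonneg (fun _ _ => zero_le_one) v)
    _ ≤ 1 := indicator_apply_le' (fun _ => le_rfl) fun _ => zero_le_one

lemma ZeroHyperbolic.mul_sum_abs_massBeyond_sub_le_freeNorm (hM : ZeroHyperbolic M) (hr : 0 ≤ r)
    (hs : ∀ t ∈ s, 0 < t ∧ r ≤ segmentGap z w t) (ν : M →₀ ℝ) {u : ℕ → ℝ} (hu : Monotone u)
    (hus : ∀ i, u i ∈ s) (n : ℕ) :
    r * ∑ i ∈ Finset.range n, |massBeyond z w ν (u (i + 1)) - massBeyond z w ν (u i)| ≤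
      freeNorm z ν := by
  set σ : ℕ → ℝ := fun i => Real.sign (massBeyond z w ν (u (i + 1)) - massBeyond z w ν (u i))
  set ψ : ℝ → ℝ := fun v =>
    ∑ i ∈ Finset.range n, σ i * ((Ici (u (i + 1))).indicator 1 v - (Ici (u i)).indicator 1 v)
  have hψ (v : ℝ) : |ψ v| ≤ 1 := by
    refine (Finset.abs_sum_le_sum_abs _ _).trans
      ((Finset.sum_le_sum fun i _ => ?_).trans (sum_abs_indicator_Ici_sub_le hu n v))
    rw [abs_mul]
    exact mul_le_of_le_one_left (abs_nonneg _) (abs_realSign_le_one _)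
  have hψ0 : ψ 0 = 0 := Finset.sum_eq_zero fun i _ => by
    simp [indicator, (hs _ (hus i)).1.not_ge, (hs _ (hus (i + 1))).1.not_ge]
  have hjump (v v' : ℝ) (hv : v < v') (hne : ψ v ≠ ψ v') : ∃ t ∈ s, v < t ∧ t ≤ v' := by
    by_contra! hnot
    have heq (i : ℕ) : (Ici (u i)).indicator (1 : ℝ → ℝ) v = (Ici (u i)).indicator 1 v' := by
      by_contra hi
      obtain ⟨h, h'⟩ := exists_lt_le_of_indicator_Ici_ne hv hi
      exact (hnot _ (hus i) h).not_ge h'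
    exact hne (Finset.sum_congr rfl fun i _ => by rw [heq, heq])
  have hpairing : pairing (fun y => ψ (gromovProduct z y w)) ν =
      ∑ i ∈ Finset.range n, |massBeyond z w ν (u (i + 1)) - massBeyond z w ν (u i)| := by
    have hsum : (fun y => ψ (gromovProduct z y w)) = ∑ i ∈ Finset.range n,
        σ i • ((beyond z w (u (i + 1))).indicator (1 : M → ℝ) -
          (beyond z w (u i)).indicator 1) := by
      ext y
      simp [ψ, indicator, beyond]
    rw [hsum, map_sum, LinearMap.sum_apply]
    refine Finset.sum_congr rfl fun i _ => ?_
    rw [map_smul, map_sub, LinearMap.smul_apply, LinearMap.sub_apply, smul_eq_mul, mul_comm]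
    exact mul_realSign _
  rw [← hpairing]
  exact (mul_le_mul_of_nonneg_left (le_abs_self _) hr).trans
    (hM.mul_abs_pairing_le_freeNorm hr (fun t ht => (hs t ht).2) hψ hψ0 hjump ν)

lemma ZeroHyperbolic.eVariationOn_massBeyond_le (hM : ZeroHyperbolic M) (hr : 0 < r)
    (hs : ∀ t ∈ s, 0 < t ∧ r ≤ segmentGap z w t) (ν : M →₀ ℝ) :
    eVariationOn (massBeyond z w ν) s ≤ ENNReal.ofReal (freeNorm z ν / r) := by
  refine iSup_le ?_
  rintro ⟨n, u, hu, hus⟩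
  simp only [edist_dist, Real.dist_eq]
  rw [← ENNReal.ofReal_sum_of_nonneg fun _ _ => abs_nonneg _]
  refine ENNReal.ofReal_le_ofReal ((le_div_iff₀' hr).2 ?_)
  exact hM.mul_sum_abs_massBeyond_sub_le_freeNorm hr.le hs ν hu hus n

end VariationOfMass

section BoundedVariation

lemma eVariationOn_sub_le {α E : Type*} [LinearOrder α] [SeminormedAddCommGroup E] (f g : α → E)
    (s : Set α) : eVariationOn (f - g) s ≤ eVariationOn f s + eVariationOn g s := by
  refine iSup_le ?_
  rintro ⟨n, u, hu, hus⟩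
  have hle (i : ℕ) : edist ((f - g) (u (i + 1))) ((f - g) (u i)) ≤
      edist (f (u (i + 1))) (f (u i)) + edist (g (u (i + 1))) (g (u i)) := by
    simp only [edist_eq_enorm_sub, Pi.sub_apply, sub_sub_sub_comm]
    exact enorm_sub_le
  refine (Finset.sum_le_sum fun i _ => hle i).trans ?_
  rw [Finset.sum_add_distrib]
  exact add_le_add (eVariationOn.sum_le hu hus) (eVariationOn.sum_le hu hus)

variable {E : Type*} [NormedAddCommGroup E] {s : Set ℝ}

lemma setLIntegral_enorm_le_of_eVariationOn (hs : MeasurableSet s) (h : ℝ → E) {t : ℝ}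
    (ht : t ∈ s) :
    ∫⁻ v in s, ‖h v‖ₑ ≤ volume s * (‖h t‖ₑ + eVariationOn h s) := by
  have hle (v : ℝ) (hv : v ∈ s) : ‖h v‖ₑ ≤ ‖h t‖ₑ + eVariationOn h s := by
    calc ‖h v‖ₑ = ‖h t + (h v - h t)‖ₑ := by rw [add_sub_cancel]
      _ ≤ ‖h t‖ₑ + ‖h v - h t‖ₑ := enorm_add_le _ _
      _ ≤ ‖h t‖ₑ + eVariationOn h s := by
          rw [← edist_eq_enorm_sub]
          gcongr
          exact eVariationOn.edist_le h hv ht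
  refine (setLIntegral_mono' hs hle).trans_eq ?_
  rw [setLIntegral_const, mul_comm]

lemma setLIntegral_enorm_le_sum_add_eVariationOn (hs : MeasurableSet s) {δ : ℝ≥0} {τ : ℕ → ℝ}
    (hτ : ∀ i : ℕ, (s ∩ Ico (i * δ : ℝ) ((i + 1) * δ)).Nonempty →
      τ i ∈ s ∩ Ico (i * δ : ℝ) ((i + 1) * δ)) (h : ℝ → E) (n : ℕ) :
    ∫⁻ v in s ∩ Ico 0 (n * δ), ‖h v‖ₑ ≤
      δ * (∑ i ∈ Finset.range n, ‖h (τ i)‖ₑ + eVariationOn h (s ∩ Ico 0 (n * δ))) := by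
  induction n with
  | zero => simp
  | succ n ih =>
    set a := s ∩ Ico (0 : ℝ) (n * δ)
    set b := s ∩ Ico (n * δ : ℝ) ((n + 1) * δ)
    have hab : s ∩ Ico (0 : ℝ) ((n + 1 : ℕ) * δ) = a ∪ b := by
      rw [← inter_union_distrib_left, Ico_union_Ico_eq_Ico (by positivity) (by gcongr; simp),
        Nat.cast_succ]
    have hcell : ∫⁻ v in b, ‖h v‖ₑ ≤ δ * (‖h (τ n)‖ₑ + eVariationOn h b) := by
      rcases b.eq_empty_or_nonempty with hb | hb
      · simp [hb]
      · refine (setLIntegral_enorm_le_of_eVariationOn (hs.inter measurableSet_Ico) h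
          (hτ n hb)).trans (mul_le_mul_left ?_ _)
        refine (measure_mono inter_subset_right).trans_eq ?_
        rw [Real.volume_Ico, ← ENNReal.ofReal_coe_nnreal]
        congr 1
        ring
    have hvar : eVariationOn h a + eVariationOn h b ≤ eVariationOn h (a ∪ b) :=
      eVariationOn.add_le_union h fun v hv w hw => hv.2.2.le.trans hw.2.1
    rw [hab, Finset.sum_range_succ]
    calc ∫⁻ v in a ∪ b, ‖h v‖ₑ ≤ (∫⁻ v in a, ‖h v‖ₑ) + ∫⁻ v in b, ‖h v‖ₑ :=
          lintegral_union_le _ a b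
      _ ≤ δ * (∑ i ∈ Finset.range n, ‖h (τ i)‖ₑ + eVariationOn h a) +
          δ * (‖h (τ n)‖ₑ + eVariationOn h b) := add_le_add ih hcell
      _ = δ * (∑ i ∈ Finset.range n, ‖h (τ i)‖ₑ + ‖h (τ n)‖ₑ +
          (eVariationOn h a + eVariationOn h b)) := by ring
      _ ≤ δ * (∑ i ∈ Finset.range n, ‖h (τ i)‖ₑ + ‖h (τ n)‖ₑ + eVariationOn h (a ∪ b)) := by
          gcongr

lemma exists_mem_forall_inter_nonempty {α ι : Type*} {s : Set α} (hs : s.Nonempty)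
    (c : ι → Set α) : ∃ τ : ι → α, ∀ i, τ i ∈ s ∧ ((s ∩ c i).Nonempty → τ i ∈ s ∩ c i) := by
  have (i : ι) : ∃ b, b ∈ s ∧ ((s ∩ c i).Nonempty → b ∈ s ∩ c i) := by
    by_cases h : (s ∩ c i).Nonempty
    · exact ⟨h.some, h.some_mem.1, fun _ => h.some_mem⟩
    · exact ⟨hs.some, hs.some_mem, fun h' => absurd h' h⟩
  choose τ hτ using this
  exact ⟨τ, hτ⟩

lemma exists_tendsto_ultrafilter_of_norm_le {ι : Type*} [ProperSpace E] (𝒰 : Ultrafilter ι)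
    {f : ι → E} {C : ℝ} (hf : ∀ j, ‖f j‖ ≤ C) : ∃ a, Tendsto f 𝒰 (𝓝 a) := by
  obtain ⟨a, -, ha⟩ := (isCompact_closedBall (0 : E) C).ultrafilter_le_nhds (𝒰.map f)
    (le_principal_iff.2 (mem_map.2 (Eventually.of_forall fun j => by simpa using hf j)))
  exact ⟨a, ha⟩

lemma tendsto_enorm_sub_ultrafilter_of_norm_le {ι : Type*} [ProperSpace E] (𝒰 : Ultrafilter ι)
    {f : ι → E} {C : ℝ} (hf : ∀ j, ‖f j‖ ≤ C) :
    Tendsto (fun q : ι × ι => ‖f q.1 - f q.2‖ₑ) (𝒰 ×ˢ 𝒰) (𝓝 0) := by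
  obtain ⟨a, ha⟩ := exists_tendsto_ultrafilter_of_norm_le 𝒰 hf
  simpa using ((ha.comp tendsto_fst).sub (ha.comp tendsto_snd)).enorm

-- Helly's selection theorem in `L¹`, with an ultrafilter in place of a convergent subsequence.
theorem tendsto_setLIntegral_enorm_sub_of_eVariationOn_le {ι : Type*} [ProperSpace E]
    (𝒰 : Ultrafilter ι) {f : ι → ℝ → E} {C L : ℝ} {V : ℝ≥0∞} (hV : V ≠ ∞)
    (hs : MeasurableSet s) (hsL : s ⊆ Ico 0 L) (hC : ∀ j, ∀ t ∈ s, ‖f j t‖ ≤ C)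
    (hfV : ∀ j, eVariationOn (f j) s ≤ V) :
    Tendsto (fun q : ι × ι => ∫⁻ t in s, ‖f q.1 t - f q.2 t‖ₑ) (𝒰 ×ˢ 𝒰) (𝓝 0) := by
  rcases s.eq_empty_or_nonempty with rfl | hne
  · simp
  refine ENNReal.tendsto_nhds_zero.2 fun ε hε => ?_
  obtain ⟨δ, hδ, hδε⟩ := ENNReal.exists_nnreal_pos_mul_lt (a := 1 + (V + V)) (by finiteness) hε.ne'
  obtain ⟨n, hn⟩ := exists_nat_ge (L / δ)
  obtain ⟨τ, hτ⟩ := exists_mem_forall_inter_nonempty hne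
    fun i : ℕ => Ico (i * δ : ℝ) ((i + 1) * δ)
  have hsn : s ∩ Ico (0 : ℝ) (n * δ) = s := by
    refine inter_eq_left.2 (hsL.trans (Ico_subset_Ico_right ?_))
    exact (div_le_iff₀ (by exact_mod_cast hδ)).1 hn
  have hsum : Tendsto (fun q : ι × ι => ∑ i ∈ Finset.range n, ‖f q.1 (τ i) - f q.2 (τ i)‖ₑ)
      (𝒰 ×ˢ 𝒰) (𝓝 0) := by
    simpa using tendsto_finsetSum (Finset.range n) fun i _ =>
      tendsto_enorm_sub_ultrafilter_of_norm_le 𝒰 fun j => hC j (τ i) (hτ i).1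
  filter_upwards [hsum.eventually_le_const one_pos] with q hq
  have hvar : eVariationOn (f q.1 - f q.2) s ≤ V + V :=
    (eVariationOn_sub_le _ _ s).trans (add_le_add (hfV q.1) (hfV q.2))
  have h := setLIntegral_enorm_le_sum_add_eVariationOn hs (fun i => (hτ i).2) (f q.1 - f q.2) n
  rw [hsn] at h
  exact h.trans ((mul_le_mul_right (add_le_add hq hvar) _).trans hδε.le)

end BoundedVariation

section GlidingHump

lemma exists_forall_eventually_le_add_of_abs_le {ι κ : Type*} [Nonempty κ] (𝒰 : Ultrafilter ι)
    {φ : κ → ι → ℝ} {C ε : ℝ} (hφ : ∀ m j, |φ m j| ≤ C) (hε : 0 < ε) :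
    ∃ m₀, ∀ m, ∀ᶠ j in 𝒰, φ m j ≤ φ m₀ j + ε := by
  choose L hL using fun m => exists_tendsto_ultrafilter_of_norm_le 𝒰 (f := φ m) (hφ m)
  have hbdd : BddAbove (range L) := by
    refine ⟨C, ?_⟩
    rintro _ ⟨m, rfl⟩
    exact le_of_tendsto (hL m) (Eventually.of_forall fun j => (le_abs_self _).trans (hφ m j))
  obtain ⟨m₀, hm₀⟩ := exists_lt_of_lt_ciSup (sub_lt_self (⨆ m, L m) hε)
  refine ⟨m₀, fun m => ?_⟩
  have hlt : L m < L m₀ + ε := by linarith [le_ciSup hbdd m]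
  exact ((hL m).eventually_lt ((hL m₀).add_const ε) hlt).mono fun j => le_of_lt

lemma exists_monotone_alternating {R T : ℕ → ℕ → Prop} (m₀ : ℕ)
    (hR : ∀ m, ∃ᶠ j in atTop, R m j) (hT : ∀ j, ∀ᶠ m in atTop, T j m) :
    ∃ m j : ℕ → ℕ, m 0 = m₀ ∧ Monotone m ∧
      ∀ i, i ≤ j i ∧ R (m i) (j i) ∧ T (j i) (m (i + 1)) := by
  choose nextJ hJle hJ using fun m i => (hR m).forall_exists_of_atTop i
  choose nextM hMle hM using fun j m => ((hT j).and (eventually_ge_atTop m)).exists.imp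
    fun _ => And.symm
  let m : ℕ → ℕ := fun i => Nat.rec m₀ (fun i m => nextM (nextJ m i) m) i
  exact ⟨m, fun i => nextJ (m i) i, rfl, monotone_nat_of_le_succ fun i => hMle _ _,
    fun i => ⟨hJle _ _, hJ _ _, hM _ _⟩⟩

variable {X : Type*} [MeasurableSpace X]

lemma exists_measurable_mem_eqOn_disjointed {β : Type*} [MeasurableSpace β] {B : ℕ → Set X}
    (hB : ∀ i, MeasurableSet (B i)) {G : ℕ → X → β} (hG : ∀ i, Measurable (G i)) {t : Set β}
    (hGt : ∀ i p, G i p ∈ t) :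
    ∃ g, Measurable g ∧ (∀ p, g p ∈ t) ∧ ∀ i, EqOn g (G i) (disjointed B i) := by
  obtain ⟨g, hg, hgG⟩ := exists_measurable_piecewise (disjointed B)
    (MeasurableSet.disjointed hB) (fun i p => (⟨G i p, hGt i p⟩ : t))
    (fun i => (hG i).subtype_mk) fun i k hik p hp =>
      ((disjoint_disjointed B hik).notMem_of_mem_left hp.1 hp.2).elim
  exact ⟨fun p => g p, hg.subtype_val, fun p => (g p).2,
    fun i p hp => congrArg Subtype.val (hgG i hp)⟩

variable {μ : Measure X}

lemma tendsto_setIntegral_compl_of_monotone {E : Type*} [NormedAddCommGroup E] [NormedSpace ℝ E]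
    {A : ℕ → Set X} (hA : ∀ m, MeasurableSet (A m)) (hmono : Monotone A)
    (hcov : ∀ᵐ p ∂μ, ∃ m, p ∈ A m) {f : X → E} (hf : Integrable f μ) :
    Tendsto (fun m => ∫ p in (A m)ᶜ, f p ∂μ) atTop (𝓝 0) := by
  have hnull : μ (⋂ m, (A m)ᶜ) = 0 := by
    rw [← compl_iUnion, ← mem_ae_iff]
    exact hcov.mono fun p => mem_iUnion.2
  simpa [Measure.restrict_eq_zero.2 hnull] using
    tendsto_setIntegral_of_antitone (fun m => (hA m).compl) (compl_anti.comp_monotone hmono)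
      ⟨0, hf.integrableOn⟩

lemma abs_sub_mul_sign_le (r r₀ : ℝ) : |r| - r * Real.sign r₀ ≤ 2 * |r₀ - r| := by
  have hmul : (r₀ - r) * Real.sign r₀ ≤ |r₀ - r| := by
    refine (le_abs_self _).trans ?_
    rw [abs_mul]
    exact mul_le_of_le_one_right (abs_nonneg _) (abs_realSign_le_one _)
  linarith [mul_realSign r₀, abs_sub_abs_le_abs_sub r r₀, abs_sub_comm r r₀,
    sub_mul r₀ r (Real.sign r₀)]

lemma integral_abs_le_integral_mul_add {f f₀ g : X → ℝ} (hf : Integrable f μ)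
    (hf₀ : Integrable f₀ μ) (hg : Measurable g) (hg1 : ∀ p, |g p| ≤ 1) {s t : Set X}
    (hs : MeasurableSet s) (ht : MeasurableSet t) (hgs : EqOn g (fun p => Real.sign (f₀ p)) s)
    (hgt : EqOn g (fun p => Real.sign (f p)) t) :
    ∫ p, |f p| ∂μ ≤ ∫ p, f p * g p ∂μ + 2 * ∫ p in s, |f₀ p - f p| ∂μ +
      2 * ∫ p in (s ∪ t)ᶜ, |f p| ∂μ := by
  have hfg : Integrable (fun p => f p * g p) μ :=
    hf.mul_bdd (c := 1) hg.aestronglyMeasurable (Eventually.of_forall hg1)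
  have hs' : Integrable (s.indicator fun p => |f₀ p - f p|) μ := (hf₀.sub hf).abs.indicator hs
  have hst' : Integrable ((s ∪ t)ᶜ.indicator fun p => |f p|) μ :=
    hf.abs.indicator (hs.union ht).compl
  have hpt (p : X) : |f p| ≤ f p * g p + 2 * s.indicator (fun p => |f₀ p - f p|) p +
      2 * (s ∪ t)ᶜ.indicator (fun p => |f p|) p := by
    by_cases hps : p ∈ s
    · have := abs_sub_mul_sign_le (f p) (f₀ p)
      simp only [hps, indicator_of_mem, mem_compl_iff, mem_union, true_or, not_true_eq_false,
        not_false_eq_true, indicator_of_notMem, hgs hps]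
      linarith
    by_cases hpt : p ∈ t
    · simp [hps, hpt, hgt hpt, mul_realSign]
    · have hneg : -|f p| ≤ f p * g p := by
        refine (neg_le_neg ?_).trans (neg_abs_le _)
        rw [abs_mul]
        exact mul_le_of_le_one_right (abs_nonneg _) (hg1 p)
      simp only [hps, hpt, mem_compl_iff, mem_union, or_self, not_false_eq_true,
        indicator_of_mem, indicator_of_notMem]
      linarith
  have hfgs : Integrable
      (fun p => f p * g p + 2 * s.indicator (fun p => |f₀ p - f p|) p) μ :=
    hfg.add (hs'.const_mul 2)
  refine (integral_mono hf.abs (hfgs.add (hst'.const_mul 2)) hpt).trans_eq ?_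
  rw [integral_add' hfgs (hst'.const_mul 2), integral_add hfg (hs'.const_mul 2),
    integral_const_mul, integral_const_mul, integral_indicator hs,
    integral_indicator (hs.union ht).compl]

lemma setIntegral_compl_union_sdiff {f : X → ℝ} (hf : Integrable f μ) {s a b : Set X}
    (hs : MeasurableSet s) (hb : MeasurableSet b) (hsa : s ⊆ a)
    (hab : a ⊆ b) :
    ∫ p in (s ∪ b \ a)ᶜ, f p ∂μ =
      ∫ p in a, f p ∂μ - ∫ p in s, f p ∂μ + ∫ p in bᶜ, f p ∂μ := by
  have hset : (s ∪ b \ a)ᶜ = a \ s ∪ bᶜ := by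
    ext p
    have := @hsa p
    have := @hab p
    simp only [mem_compl_iff, mem_union, Set.mem_sdiff]
    tauto
  have hdisj : Disjoint (a \ s) bᶜ :=
    disjoint_compl_right.mono_left (sdiff_subset.trans hab)
  rw [hset, setIntegral_union hdisj hb.compl hf.integrableOn hf.integrableOn,
    setIntegral_sdiff hs hf.integrableOn hsa]

-- With `m₀` such that no `A m` carries much more mass of `f j` than `A m₀`, the mass of `f j`
-- outside `A m₀` glides off to infinity with `j`. The function `g` has the sign of a fixed `f j₀`
-- on `A m₀`, and on each of a sequence of disjoint shells the sign of the `f j` concentrated there.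
theorem exists_measurable_forall_exists_integral_abs_le {f : ℕ → X → ℝ} {C ε : ℝ}
    (hfm : ∀ j, Measurable (f j)) (hf : ∀ j, Integrable (f j) μ)
    (hC : ∀ j, ∫ p, |f j p| ∂μ ≤ C) {A : ℕ → Set X} (hA : ∀ m, MeasurableSet (A m))
    (hmono : Monotone A) (hcov : ∀ᵐ p ∂μ, ∃ m, p ∈ A m) (𝒰 : Ultrafilter ℕ)
    (h𝒰 : ↑𝒰 ≤ (atTop : Filter ℕ))
    (hcauchy : ∀ m, Tendsto (fun q : ℕ × ℕ => ∫ p in A m, |f q.1 p - f q.2 p| ∂μ) (𝒰 ×ˢ 𝒰) (𝓝 0))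
    (hε : 0 < ε) :
    ∃ g : X → ℝ, Measurable g ∧ (∀ p, |g p| ≤ 1) ∧
      ∀ N, ∃ j ≥ N, ∫ p, |f j p| ∂μ ≤ ∫ p, f j p * g p ∂μ + ε := by
  have hε6 : 0 < ε / 6 := by positivity
  have hmass (m j : ℕ) : |∫ p in A m, |f j p| ∂μ| ≤ C := by
    rw [abs_of_nonneg (integral_nonneg fun p => abs_nonneg _)]
    exact (setIntegral_le_integral (hf j).abs (Eventually.of_forall fun p => abs_nonneg _)).trans
      (hC j)
  obtain ⟨m₀, hm₀⟩ := exists_forall_eventually_le_add_of_abs_le 𝒰 hmass hε6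
  obtain ⟨j₀, hj₀⟩ := ((hcauchy m₀).eventually_le_const hε6).curry.exists
  have htail (j : ℕ) : ∀ᶠ m in atTop, ∫ p in (A m)ᶜ, |f j p| ∂μ ≤ ε / 6 :=
    (tendsto_setIntegral_compl_of_monotone hA hmono hcov (hf j).abs).eventually_le_const hε6
  obtain ⟨m, j, hm0, hm, hmj⟩ := exists_monotone_alternating m₀
    (fun m => ((hm₀ m).and hj₀).frequently.filter_mono h𝒰) htail
  have hB : Monotone (A ∘ m) := hmono.comp hm
  obtain ⟨g, hg, hg1, hgB⟩ := exists_measurable_mem_eqOn_disjointed (B := A ∘ m)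
    (fun i => hA (m i)) (t := {r | |r| ≤ 1})
    (G := fun i p => Real.sign (f (Nat.casesOn i j₀ j) p))
    (fun i => measurable_realSign.comp (hfm _)) fun i p => abs_realSign_le_one _
  refine ⟨g, hg, hg1, fun N => ⟨j N, (hmj N).1, ?_⟩⟩
  obtain ⟨-, ⟨hnew, hold⟩, hrest⟩ := hmj N
  have hgs : EqOn g (fun p => Real.sign (f j₀ p)) (A m₀) := by
    simpa [hm0] using hgB 0
  have hgt : EqOn g (fun p => Real.sign (f (j N) p)) (A (m (N + 1)) \ A (m N)) :=
    hB.disjointed_succ (not_isMax N) ▸ hgB (N + 1)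
  have hest := integral_abs_le_integral_mul_add (hf (j N)) (hf j₀) hg hg1 (hA m₀)
    ((hA (m (N + 1))).diff (hA (m N))) hgs hgt
  rw [setIntegral_compl_union_sdiff (hf (j N)).abs (hA m₀) (hA _)
    (hmono (hm0 ▸ hm N.zero_le)) (hB N.le_succ)] at hest
  linarith

end GlidingHump

section Exhaustion

variable {M : Type*}

/-- The part of the first `m` segments of the tree spanned by `z` and the `x n` on which the metric
space `M` stays at distance at least `1 / (m + 1)` from the tree. -/
def farTree [PseudoMetricSpace M] (z : M) (x : ℕ → M) (m : ℕ) : Set (ℕ × ℝ) :=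
  {p | p.1 < m ∧ ((m : ℝ) + 1)⁻¹ ≤ segmentGap z (x p.1) p.2}

lemma measurableSet_farTree [PseudoMetricSpace M] (z : M) (x : ℕ → M) (m : ℕ) :
    MeasurableSet (farTree z x m) := by
  have hgap : Measurable fun p : ℕ × ℝ => segmentGap z (x p.1) p.2 :=
    measurable_from_prod_countable_right fun n => (continuous_segmentGap z (x n)).measurable
  exact (measurableSet_lt measurable_fst measurable_const).inter
    (measurableSet_le measurable_const hgap)

lemma monotone_farTree [PseudoMetricSpace M] (z : M) (x : ℕ → M) : Monotone (farTree z x) := by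
  rintro m n hmn p ⟨hp, hgap⟩
  refine ⟨hp.trans_le hmn, le_trans ?_ hgap⟩
  gcongr

lemma ae_treeMeasure_iff [PseudoMetricSpace M] {z : M} {x : ℕ → M} {q : ℕ × ℝ → Prop}
    (hq : MeasurableSet {p | q p}) :
    (∀ᵐ p ∂treeMeasure z x, q p) ↔ ∀ n, ∀ᵐ t ∂volume.restrict (freshHeights z x n), q (n, t) := by
  rw [treeMeasure, Measure.ae_sum_iff' hq]
  exact forall_congr' fun n => ae_map_iff measurable_prodMk_left.aemeasurable hq

variable [MetricSpace M] {z : M}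

lemma ZeroHyperbolic.ae_exists_mem_farTree [CompleteSpace M] (hM : ZeroHyperbolic M)
    (hM' : PurelyOneUnrectifiable M) (z : M) (x : ℕ → M) :
    ∀ᵐ p ∂treeMeasure z x, ∃ m, p ∈ farTree z x m := by
  simp only [← mem_iUnion]
  refine (ae_treeMeasure_iff (MeasurableSet.iUnion (measurableSet_farTree z x))).2 fun n =>
    ae_restrict_of_ae ?_
  have hgap : ∀ᵐ t, segmentGap z (x n) t ≠ 0 := by
    simpa [ae_iff] using hM.volume_segmentGap_eq_zero hM' z (x n)
  filter_upwards [hgap] with t ht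
  have hpos : 0 < segmentGap z (x n) t := (segmentGap_nonneg z (x n) t).lt_of_ne' ht
  obtain ⟨k, hk⟩ := exists_nat_one_div_lt hpos
  refine mem_iUnion.2 ⟨max k (n + 1), (lt_add_one n).trans_le (le_max_right _ _), le_trans ?_ hk.le⟩
  rw [one_div]
  gcongr
  exact le_max_left _ _

lemma setLIntegral_farTree (z : M) (x : ℕ → M) {F : ℕ × ℝ → ℝ≥0∞} (hF : Measurable F) (m : ℕ) :
    ∫⁻ p in farTree z x m, F p ∂treeMeasure z x = ∑ n ∈ Finset.range m,
      ∫⁻ t in Prod.mk n ⁻¹' farTree z x m ∩ freshHeights z x n, F (n, t) := by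
  have hfar := measurableSet_farTree z x m
  rw [treeMeasure, Measure.restrict_sum _ hfar, lintegral_sum_measure,
    tsum_eq_sum (s := Finset.range m)]
  · refine Finset.sum_congr rfl fun n _ => ?_
    rw [setLIntegral_map hfar hF measurable_prodMk_left,
      Measure.restrict_restrict (measurable_prodMk_left hfar)]
  · intro n hn
    have hempty : Prod.mk n ⁻¹' farTree z x m = ∅ :=
      eq_empty_of_forall_notMem fun t ht => hn (Finset.mem_range.2 ht.1)
    rw [setLIntegral_map hfar hF measurable_prodMk_left, hempty, setLIntegral_empty]

variable {ι : Type*} {ν : ι → M →₀ ℝ} {C : ℝ}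

lemma ZeroHyperbolic.tendsto_setLIntegral_enorm_massBeyond_sub (hM : ZeroHyperbolic M)
    (𝒰 : Ultrafilter ι) (hν : ∀ j, freeNorm z (ν j) ≤ C) {w : M} {r L : ℝ} (hr : 0 < r)
    {s : Set ℝ} (hs : MeasurableSet s) (hsL : s ⊆ Ioc 0 L) (hgap : ∀ t ∈ s, r ≤ segmentGap z w t) :
    Tendsto (fun q : ι × ι => ∫⁻ t in s,
      ‖massBeyond z w (ν q.1) t - massBeyond z w (ν q.2) t‖ₑ) (𝒰 ×ˢ 𝒰) (𝓝 0) := by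
  refine tendsto_setLIntegral_enorm_sub_of_eVariationOn_le 𝒰 (L := L + 1)
    (f := fun j => massBeyond z w (ν j)) (C := C / r) (ENNReal.ofReal_ne_top (r := C / r)) hs
    (fun t ht => ⟨(hsL ht).1.le, (hsL ht).2.trans_lt (lt_add_one L)⟩) (fun j t ht => ?_)
    fun j => ?_
  · exact (le_div_iff₀' hr).2
      ((hM.mul_abs_massBeyond_le_freeNorm hr.le (hsL ht).1 (hgap t ht) _).trans (hν j))
  · refine (hM.eVariationOn_massBeyond_le hr (fun t ht => ⟨(hsL ht).1, hgap t ht⟩) _).trans ?_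
    gcongr
    exact hν j

theorem ZeroHyperbolic.tendsto_setIntegral_farTree_abs_treeMass_sub (hM : ZeroHyperbolic M)
    (𝒰 : Ultrafilter ι) (hν : ∀ j, freeNorm z (ν j) ≤ C) (x : ℕ → M) (m : ℕ) :
    Tendsto (fun q : ι × ι => ∫ p in farTree z x m,
      |treeMass z x (ν q.1) p - treeMass z x (ν q.2) p| ∂treeMeasure z x) (𝒰 ×ˢ 𝒰) (𝓝 0) := by
  have hmeas (q : ι × ι) : Measurable (treeMass z x (ν q.1) - treeMass z x (ν q.2)) :=
    (measurable_treeMass z x _).sub (measurable_treeMass z x _)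
  have hlim : Tendsto (fun q : ι × ι => ∫⁻ p in farTree z x m,
      ‖treeMass z x (ν q.1) p - treeMass z x (ν q.2) p‖ₑ ∂treeMeasure z x) (𝒰 ×ˢ 𝒰) (𝓝 0) := by
    have hslice (n : ℕ) :=
      hM.tendsto_setLIntegral_enorm_massBeyond_sub 𝒰 hν (w := x n) (r := ((m : ℝ) + 1)⁻¹)
        (by positivity) ((measurable_prodMk_left (measurableSet_farTree z x m)).inter
          (measurableSet_freshHeights z x n)) (fun t ht => ht.2.1) fun t ht => ht.1.2
    have hsum := tendsto_finsetSum (Finset.range m) fun n _ => hslice n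
    rw [Finset.sum_const_zero] at hsum
    exact hsum.congr fun q => (setLIntegral_farTree z x (hmeas q).enorm m).symm
  refine ((ENNReal.tendsto_toReal ENNReal.zero_ne_top).comp hlim).congr fun q => ?_
  exact (integral_norm_eq_lintegral_enorm (hmeas q).aestronglyMeasurable).symm

end Exhaustion

section Norming

lemma exists_seq_forall_support_subset_range {α : Type*} [Nonempty α] (ν : ℕ → α →₀ ℝ) :
    ∃ x : ℕ → α, ∀ j, ∀ y ∈ (ν j).support, y ∈ range x := by
  have hcount : (⋃ j, ((ν j).support : Set α)).Countable :=
    countable_iUnion fun j => (ν j).support.countable_toSet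
  obtain ⟨x, hx⟩ := countable_iff_exists_subset_range.1 hcount
  exact ⟨x, fun j y hy => hx (mem_iUnion.2 ⟨j, hy⟩)⟩

variable {M : Type*} [MetricSpace M] [CompleteSpace M]

theorem ZeroHyperbolic.exists_lipschitzWith_forall_exists_freeNorm_le (hM : ZeroHyperbolic M)
    (hM' : PurelyOneUnrectifiable M) (z : M) {ν : ℕ → M →₀ ℝ} {C ε : ℝ}
    (hν : ∀ j, freeNorm z (ν j) ≤ C) (hε : 0 < ε) :
    ∃ f : M → ℝ, f z = 0 ∧ LipschitzWith 1 f ∧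
      ∀ N, ∃ j ≥ N, freeNorm z (ν j) ≤ pairing f (ν j) + ε := by
  have : Nonempty M := ⟨z⟩
  obtain ⟨x, hx⟩ := exists_seq_forall_support_subset_range ν
  have hnorm (j : ℕ) := hM.freeNorm_eq_integral_abs_treeMass z (hx j)
  obtain ⟨g, hg, hg1, hgν⟩ := exists_measurable_forall_exists_integral_abs_le
    (fun j => measurable_treeMass z x (ν j)) (fun j => hM.integrable_treeMass z x (ν j))
    (fun j => (hnorm j).symm.trans_le (hν j)) (measurableSet_farTree z x) (monotone_farTree z x)
    (hM.ae_exists_mem_farTree hM' z x) (hyperfilter ℕ) Nat.hyperfilter_le_atTop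
    (hM.tendsto_setIntegral_farTree_abs_treeMass_sub _ hν x) hε
  refine ⟨treeIntegral z x g, hM.treeIntegral_base z x g, hM.lipschitzWith_treeIntegral hg hg1,
    fun N => (hgν N).imp fun j hj => ?_⟩
  rwa [hnorm, hM.pairing_treeIntegral hg hg1]

end Norming

/-- The Lipschitz-free space over a complete, `0`-hyperbolic, purely `1`-unrectifiable
metric space is `1`-Schur. -/
theorem freeSpace_one_schur_of_zeroHyperbolic_purelyOneUnrectifiable
    {M : Type*} [MetricSpace M] [CompleteSpace M] (z : M)
    (hhyp : ∀ x y u v : M,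
      dist x y + dist u v ≤ max (dist x u + dist y v) (dist x v + dist y u))
    (hp1u : PurelyOneUnrectifiable M)
    (μ : ℕ → M →₀ ℝ) (hbdd : ∃ C : ℝ, ∀ n, freeNorm z (μ n) ≤ C) :
    seqCa z μ ≤ seqDe z μ := by
  have hM : ZeroHyperbolic M := hhyp
  obtain ⟨C, hC⟩ := hbdd
  refine le_of_forall_lt_imp_le_of_dense fun c hc => le_of_forall_pos_sub_le fun ε hε => ?_
  choose k hk l hl hkl using exists_lt_freeNorm_sub_of_lt_seqCa hc
  have hν (n : ℕ) : freeNorm z (μ (k n) - μ (l n)) ≤ C + C :=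
    (freeNorm_sub_le z _ _).trans (add_le_add (hC _) (hC _))
  obtain ⟨f, hfz, hf, hfν⟩ := hM.exists_lipschitzWith_forall_exists_freeNorm_le hp1u z hν hε
  refine le_seqDe hC hfz hf fun N => ?_
  obtain ⟨n, hn, hfn⟩ := hfν N
  refine ⟨k n, hn.trans (hk n), l n, hn.trans (hl n), ?_⟩
  exact (sub_le_iff_le_add.2 ((hkl n).le.trans hfn)).trans (le_abs_self _)
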